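/- The number of involutions of length n avoiding both 132 and 1234 equals the n-th Fibonacci number F_n, where F_0=F_1=1 and F_n=F_{n-1}+F_{n-2}. -/

import Mathlib

/-!
Call an involution avoiding 132 and 1234 good, and let `a n` be the number of good involutions `f`
of length `n`. The first entry controls everything: by 132-avoidance the values exceeding `f 0`
appear in increasing order, so by 1234-avoidance there are at most two of them
(`Good.apply_zero_ge`); in particular `f 0 ≠ 0` once `n ≥ 4`.

Deleting the two-cycle `(0, f 0)` then leaves a good involution `τ` of length two less; conversely,
inserting into a good `τ` of length `m` a two-cycle through `0` that leaves at most two larger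
values gives a good involution if and only if `τ` is increasing on the positions past the inserted
one (`good_ins_iff`). This condition is void when `f 0` is one of the two largest values. When `f 0`
is the third largest value, it says that `τ` ends with an ascent, and a good `τ` ends with a descent
exactly when `τ 0` is the largest value (`Good.not_ascent_iff`). Hence
`a (n + 4) = a (n + 2) + a (n + 2) + (a (n + 2) - a n)`, a recurrence satisfied by the Fibonacci
numbers.
-/

def IsInvolution {n : ℕ} (π : Equiv.Perm (Fin n)) : Prop := ∀ i, π (π i) = i

def Avoids132 {n : ℕ} (π : Equiv.Perm (Fin n)) : Prop :=
  ¬ ∃ i j k : Fin n, i < j ∧ j < k ∧ π i < π k ∧ π k < π j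

def fixCount {n : ℕ} (π : Equiv.Perm (Fin n)) : ℕ :=
  (Finset.univ.filter fun i => π i = i).card

def Avoids1234 {n : ℕ} (π : Equiv.Perm (Fin n)) : Prop :=
  ¬ ∃ i j k l : Fin n, i < j ∧ j < k ∧ k < l ∧ π i < π j ∧ π j < π k ∧ π k < π l

/-! ### Good involutions and insertion -/

/-- The involutions avoiding 132 and 1234, as plain self-maps of `Fin n` so that they can be built
without exhibiting an inverse. -/
def Good {n : ℕ} (f : Fin n → Fin n) : Prop :=
  (∀ i, f (f i) = i) ∧
  (∀ i j k : Fin n, i < j → j < k → f i < f k → ¬ f k < f j) ∧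
  (∀ i j k l : Fin n, i < j → j < k → k < l → f i < f j → f j < f k → ¬ f k < f l)

set_option synthInstance.maxSize 1000 in
instance {n : ℕ} (f : Fin n → Fin n) : Decidable (Good f) := by
  unfold Good; infer_instance

/-- The increasing map `Fin m → Fin (m + 2)` whose image omits `0` and `q + 1`. -/
def emb {m : ℕ} (q : Fin (m + 1)) (a : Fin m) : Fin (m + 2) := (q.succAbove a).succ

/-- The self-map of `Fin (m + 2)` that swaps `0` and `q + 1` and acts as `τ` on the other points,
relabelled in increasing order. -/
def ins {m : ℕ} (q : Fin (m + 1)) (τ : Fin m → Fin m) : Fin (m + 2) → Fin (m + 2) :=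
  Fin.cons q.succ (q.insertNth (α := fun _ => Fin (m + 2)) 0 fun a => emb q (τ a))

section Insertion

variable {m : ℕ} (q : Fin (m + 1))

lemma ins_zero (τ : Fin m → Fin m) : ins q τ 0 = q.succ := by simp [ins]

lemma ins_succ (τ : Fin m → Fin m) : ins q τ q.succ = 0 := by simp [ins]

lemma ins_emb (τ : Fin m → Fin m) (a : Fin m) : ins q τ (emb q a) = emb q (τ a) := by
  simp [ins, emb]

lemma emb_strictMono : StrictMono (emb q) := by
  intro a b h
  simpa [emb] using h

lemma emb_ne_zero (a : Fin m) : emb q a ≠ 0 := Fin.succ_ne_zero _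

lemma emb_ne_succ (a : Fin m) : emb q a ≠ q.succ := by
  simp [emb, Fin.succAbove_ne]

lemma succ_lt_emb {a : Fin m} : q.succ < emb q a ↔ (q : ℕ) ≤ a := by
  simp only [emb, Fin.succ_lt_succ_iff, Fin.lt_succAbove_iff_le_castSucc, Fin.le_def,
    Fin.val_castSucc]

lemma cases_emb (i : Fin (m + 2)) : i = 0 ∨ i = q.succ ∨ ∃ a, i = emb q a := by
  refine Fin.cases (Or.inl rfl) (fun j => Or.inr ?_) i
  rcases eq_or_ne j q with rfl | h
  · exact Or.inl rfl
  · obtain ⟨a, rfl⟩ := Fin.exists_succAbove_eq h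
    exact Or.inr ⟨a, rfl⟩

lemma ins_injective : Function.Injective (ins q) := by
  intro τ σ h
  funext a
  have := congrFun h (emb q a)
  rw [ins_emb, ins_emb] at this
  exact (emb_strictMono q).injective this

/-- Every involution sending `0` to `q + 1` arises by insertion. -/
lemma exists_ins_eq {f : Fin (m + 2) → Fin (m + 2)} (hf : ∀ i, f (f i) = i)
    (h0 : f 0 = q.succ) : ∃ τ, ins q τ = f := by
  have h1 : f q.succ = 0 := by rw [← h0, hf]
  have h : ∀ a, ∃ b, f (emb q a) = emb q b := by
    intro a
    rcases cases_emb q (f (emb q a)) with h | h | h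
    · refine absurd ?_ (emb_ne_succ q a)
      rw [← hf (emb q a), h, h0]
    · refine absurd ?_ (emb_ne_zero q a)
      rw [← hf (emb q a), h, h1]
    · exact h
  choose τ hτ using h
  refine ⟨τ, funext fun i => ?_⟩
  rcases cases_emb q i with rfl | rfl | ⟨a, rfl⟩
  · rw [ins_zero, h0]
  · rw [ins_succ, h1]
  · rw [ins_emb, hτ]

/-- Inserting a two-cycle through `0` with at most two larger values keeps an involution good
exactly when `τ` increases on the positions that end up to the right of `q + 1`. -/
lemma good_ins_iff (hq : m ≤ q + 2) (τ : Fin m → Fin m) :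
    Good (ins q τ) ↔ Good τ ∧ ∀ a b : Fin m, (q : ℕ) ≤ a → a < b → τ a < τ b := by
  have hm : ∀ {a b}, emb q a < emb q b ↔ a < b := (emb_strictMono q).lt_iff_lt
  constructor
  · rintro ⟨h, h132, h1234⟩
    have hinv : ∀ a, τ (τ a) = a := fun a => by
      have := h (emb q a)
      rw [ins_emb, ins_emb] at this
      exact (emb_strictMono q).injective this
    refine ⟨⟨hinv, fun i j k => ?_, fun i j k l => ?_⟩, fun a b ha hab => ?_⟩
    · simpa only [ins_emb, hm] using h132 (emb q i) (emb q j) (emb q k)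
    · simpa only [ins_emb, hm] using h1234 (emb q i) (emb q j) (emb q k) (emb q l)
    · -- A descent to the right of position `q + 1`, which carries the value `0`, is a 132.
      have := h132 q.succ (emb q a) (emb q b) ((succ_lt_emb q).2 ha) (hm.2 hab)
      simp only [ins_succ, ins_emb, hm, Fin.pos_iff_ne_zero, ne_eq, emb_ne_zero,
        not_false_eq_true, forall_const, not_lt] at this
      refine lt_of_le_of_ne this fun e => hab.ne ?_
      rw [← hinv a, e, hinv]
  · rintro ⟨⟨hinv, h132, h1234⟩, hH⟩
    have hf : ∀ i, ins q τ (ins q τ i) = i := by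
      intro i
      rcases cases_emb q i with rfl | rfl | ⟨a, rfl⟩
      · rw [ins_zero, ins_succ]
      · rw [ins_succ, ins_zero]
      · rw [ins_emb, ins_emb, hinv]
    -- The second position of an increasing pair is never `0` or `q + 1`, whose values are
    -- `q + 1` and `0`.
    have key : ∀ i j, i < j → ins q τ i < ins q τ j → ∃ b, j = emb q b := by
      intro i j hij hfij
      rcases cases_emb q j with rfl | rfl | h
      · exact absurd hij (Fin.not_lt_zero _)
      · rw [ins_succ] at hfij
        exact absurd hfij (Fin.not_lt_zero _)
      · exact h
    refine ⟨hf, fun i j k hij hjk h1 h2 => ?_, fun i j k l hij hjk hkl h1 h2 h3 => ?_⟩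
    · obtain ⟨b, rfl⟩ := key i j hij (h1.trans h2)
      obtain ⟨c, rfl⟩ := key i k (hij.trans hjk) h1
      rw [ins_emb] at h1
      rw [ins_emb, ins_emb, hm] at h2
      rw [hm] at hjk
      rcases cases_emb q i with rfl | rfl | ⟨a, rfl⟩
      · -- Here the values at `j` and `k` exceed `q + 1`; the inverse of `τ`, that is `τ`,
        -- increases on them.
        rw [ins_zero, succ_lt_emb] at h1
        have := hH _ _ h1 h2
        rw [hinv, hinv] at this
        exact absurd this hjk.asymm
      · exact h2.asymm (hH _ _ ((succ_lt_emb q).1 hij) hjk)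
      · rw [ins_emb, hm] at h1
        exact h132 a b c (hm.1 hij) hjk h1 h2
    · obtain ⟨b, rfl⟩ := key i j hij h1
      obtain ⟨c, rfl⟩ := key _ k hjk h2
      obtain ⟨d, rfl⟩ := key _ l hkl h3
      rw [ins_emb] at h1
      rw [ins_emb, ins_emb, hm] at h2 h3
      rw [hm] at hjk hkl
      -- Unless `i` is in the image of `emb q`, three numbers fit between `q` and `m ≤ q + 2`.
      rcases cases_emb q i with rfl | rfl | ⟨a, rfl⟩
      · rw [ins_zero, succ_lt_emb] at h1
        omega
      · have := (succ_lt_emb q).1 hij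
        omega
      · rw [ins_emb, hm] at h1
        exact h1234 a b c d (hm.1 hij) hjk hkl h1 h2 h3

lemma ncard_good_apply_zero (hq : m ≤ q + 2) :
    {f : Fin (m + 2) → Fin (m + 2) | Good f ∧ f 0 = q.succ}.ncard =
      {τ : Fin m → Fin m |
        Good τ ∧ ∀ a b : Fin m, (q : ℕ) ≤ a → a < b → τ a < τ b}.ncard := by
  rw [← Set.ncard_image_of_injective _ (ins_injective q)]
  congr 1
  ext f
  constructor
  · rintro ⟨hf, h0⟩
    obtain ⟨τ, rfl⟩ := exists_ins_eq q hf.1 h0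
    exact ⟨τ, (good_ins_iff q hq τ).1 hf, rfl⟩
  · rintro ⟨τ, hτ, rfl⟩
    exact ⟨(good_ins_iff q hq τ).2 hτ, ins_zero q τ⟩

lemma ncard_good_apply_zero_of_le (hq : m ≤ q + 1) :
    {f : Fin (m + 2) → Fin (m + 2) | Good f ∧ f 0 = q.succ}.ncard =
      {τ : Fin m → Fin m | Good τ}.ncard := by
  rw [ncard_good_apply_zero q (by omega)]
  congr 1
  ext τ
  exact ⟨fun h => h.1, fun h => ⟨h, fun a b _ _ => by omega⟩⟩

end Insertion

/-! ### First entry and last two entries of a good involution -/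

/-- At most two values exceed the first entry. -/
lemma Good.apply_zero_ge {n : ℕ} {f : Fin (n + 4) → Fin (n + 4)} (hf : Good f) :
    n + 1 ≤ (f 0 : ℕ) := by
  obtain ⟨hinv, h132, h1234⟩ := hf
  by_contra! hlt
  -- Otherwise the three largest values all exceed `f 0`.
  have hpos : ∀ v : Fin (n + 4), n + 1 ≤ (v : ℕ) → 0 < f v := by
    intro v hv
    rw [Fin.pos_iff_ne_zero]
    intro h
    have : f 0 = v := by rw [← h, hinv]
    rw [this] at hlt
    omega
  have hinc : ∀ v w : Fin (n + 4), n + 1 ≤ (v : ℕ) → v < w → f v < f w := by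
    intro v w hv hvw
    by_contra! hle
    have hne : f w ≠ f v := fun e => hvw.ne' (by rw [← hinv w, e, hinv])
    refine h132 0 (f w) (f v) (hpos w (by omega)) (lt_of_le_of_ne hle hne) ?_ ?_
    · rw [hinv, Fin.lt_def]; omega
    · rwa [hinv, hinv]
  let a : Fin (n + 4) := ⟨n + 1, by omega⟩
  let b : Fin (n + 4) := ⟨n + 2, by omega⟩
  let c : Fin (n + 4) := ⟨n + 3, by omega⟩
  have hab : a < b := by simp [a, b]
  have hbc : b < c := by simp [b, c]
  refine h1234 0 (f a) (f b) (f c) (hpos a le_rfl) (hinc a b le_rfl hab)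
    (hinc b c (by simp [b]) hbc) ?_ ?_ ?_
  · rw [hinv, Fin.lt_def]; simpa [a] using hlt
  · rwa [hinv, hinv]
  · rwa [hinv, hinv]

/-- A good involution ends with a descent exactly when its first entry is the largest value. -/
lemma Good.not_ascent_iff {n : ℕ} {f : Fin (n + 2) → Fin (n + 2)} (hf : Good f) :
    (¬ ∀ a b : Fin (n + 2), n ≤ (a : ℕ) → a < b → f a < f b) ↔ f 0 = (Fin.last n).succ := by
  obtain ⟨hinv, h132, -⟩ := hf
  constructor
  · intro h
    push Not at h
    obtain ⟨a, b, ha, hab, hle⟩ := h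
    have hne : f b ≠ f a := fun e => hab.ne' (by rw [← hinv b, e, hinv])
    have hlt := lt_of_le_of_ne hle hne
    by_contra h0
    have hb : f b ≠ 0 := fun e => h0 (by
      rw [← e, hinv]
      ext
      simp only [Fin.val_succ, Fin.val_last]
      omega)
    have hb' : 0 < f b := Fin.pos_iff_ne_zero.2 hb
    -- The value `0` sits before the final descent, and completes it to a 132.
    have h1 : f 0 ≠ a := fun e => by
      rw [← e, hinv] at hlt
      exact Fin.not_lt_zero _ hlt
    have h2 : f 0 ≠ b := fun e => by
      rw [← e, hinv] at hb
      exact hb rfl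
    refine h132 (f 0) a b ?_ hab (by rwa [hinv]) hlt
    omega
  · intro h0 h
    have := h (Fin.last n).castSucc (Fin.last n).succ (by simp) (by simp [Fin.lt_def])
    rw [← h0, hinv] at this
    exact Fin.not_lt_zero _ this

/-! ### The recurrence -/

/-- Classification by the first entry `n + 1`, `n + 2` or `n + 3`; only the first of these classes
misses some good involutions of length `n + 2`, namely those ending with a descent. -/
lemma ncard_good_rec (n : ℕ) :
    {f : Fin (n + 4) → Fin (n + 4) | Good f}.ncard + {f : Fin n → Fin n | Good f}.ncard =
      3 * {f : Fin (n + 2) → Fin (n + 2) | Good f}.ncard := by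
  let q₀ : Fin (n + 3) := ⟨n, by omega⟩
  let q₁ : Fin (n + 3) := ⟨n + 1, by omega⟩
  let q₂ : Fin (n + 3) := ⟨n + 2, by omega⟩
  have hsplit : {f : Fin (n + 4) → Fin (n + 4) | Good f} =
      ({f | Good f ∧ f 0 = q₀.succ} ∪ {f | Good f ∧ f 0 = q₁.succ}) ∪
        {f | Good f ∧ f 0 = q₂.succ} := by
    ext f
    simp only [Set.mem_union, Set.mem_ofPred_eq, ← and_or_left]
    refine ⟨fun hf => ⟨hf, ?_⟩, fun h => h.1⟩
    have := hf.apply_zero_ge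
    simp only [Fin.ext_iff, Fin.val_succ, q₀, q₁, q₂]
    omega
  have h2 : {f : Fin (n + 4) → Fin (n + 4) | Good f ∧ f 0 = q₂.succ}.ncard =
      {τ : Fin (n + 2) → Fin (n + 2) | Good τ}.ncard :=
    ncard_good_apply_zero_of_le q₂ (by simp [q₂])
  have h1 : {f : Fin (n + 4) → Fin (n + 4) | Good f ∧ f 0 = q₁.succ}.ncard =
      {τ : Fin (n + 2) → Fin (n + 2) | Good τ}.ncard :=
    ncard_good_apply_zero_of_le q₁ (by simp [q₁])
  have h0 : {f : Fin (n + 4) → Fin (n + 4) | Good f ∧ f 0 = q₀.succ}.ncard =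
      {τ : Fin (n + 2) → Fin (n + 2) |
        Good τ ∧ ∀ a b : Fin (n + 2), (q₀ : ℕ) ≤ a → a < b → τ a < τ b}.ncard :=
    ncard_good_apply_zero q₀ (by simp [q₀])
  have hd := ncard_good_apply_zero_of_le (Fin.last n) (by simp)
  have hdiff : {τ : Fin (n + 2) → Fin (n + 2) | Good τ} =
      {τ | Good τ ∧ ∀ a b : Fin (n + 2), (q₀ : ℕ) ≤ a → a < b → τ a < τ b} ∪
        {τ | Good τ ∧ τ 0 = (Fin.last n).succ} := by
    ext τ
    simp only [Set.mem_union, Set.mem_ofPred_eq, ← and_or_left]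
    refine ⟨fun hτ => ⟨hτ, ?_⟩, fun h => h.1⟩
    rw [← hτ.not_ascent_iff]
    exact em _
  have hsum := congrArg Set.ncard hdiff
  rw [Set.ncard_union_eq ?_ (Set.toFinite _) (Set.toFinite _)] at hsum
  · rw [hsplit, Set.ncard_union_eq ?_ (Set.toFinite _) (Set.toFinite _),
      Set.ncard_union_eq ?_ (Set.toFinite _) (Set.toFinite _)]
    · rw [h0, h1, h2]
      omega
    · rw [Set.disjoint_left]
      rintro f ⟨-, h⟩ ⟨-, h'⟩
      simp [h, q₀, q₁] at h'
    · rw [Set.disjoint_left]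
      rintro f (⟨-, h⟩ | ⟨-, h⟩) ⟨-, h'⟩ <;> simp [h, q₀, q₁, q₂] at h'
  · rw [Set.disjoint_left]
    rintro τ ⟨hτ, h⟩ ⟨-, h'⟩
    exact hτ.not_ascent_iff.2 h' h

lemma ncard_good : ∀ n : ℕ, {f : Fin n → Fin n | Good f}.ncard = Nat.fib (n + 1)
  | 0 => by rw [Set.ncard_eq_toFinset_card']; decide
  | 1 => by rw [Set.ncard_eq_toFinset_card']; decide
  | 2 => by rw [Set.ncard_eq_toFinset_card']; decide
  | 3 => by rw [Set.ncard_eq_toFinset_card']; decide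
  | n + 4 => by
    have h := ncard_good_rec n
    rw [ncard_good n, ncard_good (n + 2)] at h
    have e3 : Nat.fib (n + 3) = Nat.fib (n + 1) + Nat.fib (n + 2) := Nat.fib_add_two
    have e4 : Nat.fib (n + 4) = Nat.fib (n + 2) + Nat.fib (n + 3) := Nat.fib_add_two
    have e5 : Nat.fib (n + 5) = Nat.fib (n + 3) + Nat.fib (n + 4) := Nat.fib_add_two
    change _ = Nat.fib (n + 5)
    change _ + _ = 3 * Nat.fib (n + 3) at h
    omega

theorem stmt6 (n : ℕ) :
    Nat.card {π : Equiv.Perm (Fin n) // IsInvolution π ∧ Avoids132 π ∧ Avoids1234 π} =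
      Nat.fib (n + 1) := by
  have hiff : ∀ π : Equiv.Perm (Fin n),
      IsInvolution π ∧ Avoids132 π ∧ Avoids1234 π ↔ Good (π : Fin n → Fin n) := by
    intro π
    simp only [IsInvolution, Avoids132, Avoids1234, Good, not_exists, not_and]
  rw [← ncard_good, ← Nat.card_coe_set_eq]
  refine Nat.card_congr
    { toFun := fun π => ⟨π.1, (hiff π.1).1 π.2⟩
      invFun := fun f => ⟨Function.Involutive.toPerm f.1 f.2.1, (hiff _).2 f.2⟩
      left_inv := fun π => Subtype.ext (Equiv.ext fun _ => rfl)
      right_inv := fun f => rfl }
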